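/- Let ℓ be an odd prime and let G be a subgroup of GL₂(F_ℓ) such that every element of G lies in a conjugate of N_ns, some element of G does not lie in any conjugate of C_ns, and the determinant map G → F_ℓˣ is surjective. Then either G is contained in a conjugate of N_ns, or the image H of G in PGL₂(F_ℓ) is isomorphic to S₄ and ℓ ≡ 11 (mod 24). -/

import Mathlib

open Matrix

abbrev GL2 (ℓ : ℕ) : Type := GL (Fin 2) (ZMod ℓ)

/-- The underlying matrix of an element of `GL₂(F_ℓ)`. -/
def mat {ℓ : ℕ} (g : GL2 ℓ) : Matrix (Fin 2) (Fin 2) (ZMod ℓ) := g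

/-- `g` is a diagonal matrix. -/
def IsDiag {ℓ : ℕ} (g : GL2 ℓ) : Prop := mat g 0 1 = 0 ∧ mat g 1 0 = 0

/-- `g` is an antidiagonal matrix. -/
def IsAnti {ℓ : ℕ} (g : GL2 ℓ) : Prop := mat g 0 0 = 0 ∧ mat g 1 1 = 0

/-- `g` is a scalar matrix. -/
def IsScalar {ℓ : ℕ} (g : GL2 ℓ) : Prop :=
  ∃ c : ZMod ℓ, mat g = c • (1 : Matrix (Fin 2) (Fin 2) (ZMod ℓ))

/-- Membership in the split Cartan subgroup `C_sp` (the diagonal matrices). -/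
def InCsp {ℓ : ℕ} (g : GL2 ℓ) : Prop := IsDiag g

/-- Membership in the normalizer `N_sp` of the split Cartan (diagonal or antidiagonal). -/
def InNsp {ℓ : ℕ} (g : GL2 ℓ) : Prop := IsDiag g ∨ IsAnti g

/-- Membership in the nonsplit Cartan `C_ns` w.r.t. the nonresidue `δ`:
matrices of the form `[[a, δb], [b, a]]`. -/
def InCns {ℓ : ℕ} (δ : ZMod ℓ) (g : GL2 ℓ) : Prop :=
  mat g 1 1 = mat g 0 0 ∧ mat g 0 1 = δ * mat g 1 0

/-- Membership in `N_ns \ C_ns` (as a matrix shape): `[[a, -δb], [b, -a]]`. -/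
def InNnsAnti {ℓ : ℕ} (δ : ZMod ℓ) (g : GL2 ℓ) : Prop :=
  mat g 1 1 = - mat g 0 0 ∧ mat g 0 1 = - (δ * mat g 1 0)

/-- Membership in the normalizer `N_ns` of the nonsplit Cartan. -/
def InNns {ℓ : ℕ} (δ : ZMod ℓ) (g : GL2 ℓ) : Prop := InCns δ g ∨ InNnsAnti δ g

/-- `PGL₂(F_ℓ)`: the quotient of `GL₂(F_ℓ)` by its center (the scalar matrices). -/
abbrev PGL2 (ℓ : ℕ) : Type := GL2 ℓ ⧸ Subgroup.center (GL2 ℓ)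

/-- The natural projection `GL₂(F_ℓ) →* PGL₂(F_ℓ)`. -/
def toPGL (ℓ : ℕ) : GL2 ℓ →* PGL2 ℓ := QuotientGroup.mk' _

/-- The image of a subgroup of `GL₂(F_ℓ)` in `PGL₂(F_ℓ)`. -/
def projImage {ℓ : ℕ} (G : Subgroup (GL2 ℓ)) : Subgroup (PGL2 ℓ) := G.map (toPGL ℓ)

/-- `H` is isomorphic to the alternating group `A₄`. -/
def IsA4 {ℓ : ℕ} (H : Subgroup (PGL2 ℓ)) : Prop := Nonempty (H ≃* alternatingGroup (Fin 4))

/-- `H` is isomorphic to the symmetric group `S₄`. -/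
def IsS4 {ℓ : ℕ} (H : Subgroup (PGL2 ℓ)) : Prop := Nonempty (H ≃* Equiv.Perm (Fin 4))

/-- `H` is isomorphic to the alternating group `A₅`. -/
def IsA5 {ℓ : ℕ} (H : Subgroup (PGL2 ℓ)) : Prop := Nonempty (H ≃* alternatingGroup (Fin 5))

lemma arith_aux {ca cb cd N : ℕ} (hN : 0 < N) (ha : ca = 2) (hcb : 2 ≤ cb) (hb : Even cb)
    (hcd : 2 ≤ cd) (h : (1:ℚ) - 1/cd = 1/ca + 1/cb - 2/N) :
    N ≤ 2*cb ∨ N ≤ 2*cd ∨ (N = 24 ∧ cb = 4 ∧ cd = 3) := by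
  subst ha
  have hNq : (0:ℚ) < N := by exact_mod_cast hN
  have hbq : (0:ℚ) < cb := by exact_mod_cast (by omega)
  have hdq : (0:ℚ) < cd := by exact_mod_cast (by omega)
  have hNi : (0:ℚ) < 2/N := by positivity
  rcases Nat.lt_or_ge 2 cd with h3 | h2
  · have h3q : (1:ℚ)/cd ≤ 1/3 := by
      apply one_div_le_one_div_of_le (by norm_num); exact_mod_cast h3
    have h6 : (1:ℚ)/6 < 1/cb := by push_cast at h; linarith
    have h6' : cb < 6 := by
      have := lt_of_one_div_lt_one_div (by norm_num) h6
      exact_mod_cast this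
    have : cb = 2 ∨ cb = 4 := by
      obtain ⟨m, hm⟩ := hb; omega
    rcases this with rfl | rfl
    · right; left
      push_cast at h
      have : (N:ℚ) = 2*cd := by field_simp at h; linarith
      have : N = 2*cd := by exact_mod_cast this
      omega
    · right; right
      push_cast at h
      have h4 : (1:ℚ)/4 < 1/cd := by linarith
      have h4' : cd < 4 := by
        have := lt_of_one_div_lt_one_div (by norm_num) h4
        exact_mod_cast this
      have : cd = 3 := by omega
      subst this
      push_cast at h
      have : (N:ℚ) = 24 := by field_simp at h; linarith
      exact ⟨by exact_mod_cast this, rfl, rfl⟩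
  · left
    have : cd = 2 := by omega
    subst this
    push_cast at h
    have : (N:ℚ) = 2*cb := by field_simp at h; linarith
    have : N = 2*cb := by exact_mod_cast this
    omega

lemma arith_main {Ω : Type*} (S : Finset Ω) (E : Ω → Prop) [DecidablePred E] (c f : Ω → ℕ) (N : ℕ)
    (hN : 0 < N)
    (hc : ∀ w ∈ S, 2 ≤ c w) (hE : ∀ w ∈ S, E w → Even (c w)) (hf : ∀ w ∈ S, f w = 1 ∨ f w = 2)
    (hfc : ∀ w ∈ S, f w * c w ≤ N)
    (h1 : ∑ w ∈ S.filter E, (1:ℚ) / f w = 1)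
    (h2 : ∑ w ∈ S, (1 - (1:ℚ) / c w) / f w = 1 - 1 / N) :
    (∃ w ∈ S, N ≤ 2 * c w) ∨ (N = 24 ∧ (∃ b ∈ S, E b ∧ c b = 4) ∧ ∃ d ∈ S, c d = 3 ∧ f d = 2) := by
  classical
  have hNq : (0:ℚ) < N := by exact_mod_cast hN
  have hNi : (0:ℚ) < 1/N := by positivity
  have hci : ∀ w ∈ S, (1:ℚ)/c w ≤ 1/2 := fun w hw => by
    apply one_div_le_one_div_of_le (by norm_num); exact_mod_cast hc w hw
  have hterm : ∀ w ∈ S, (1:ℚ)/4 ≤ (1 - (1:ℚ) / c w) / f w := fun w hw => by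
    have := hci w hw
    rcases hf w hw with h | h <;> rw [h] <;> push_cast <;> linarith
  have hfpos : ∀ w ∈ S, (1:ℚ)/2 ≤ 1 / f w := fun w hw => by
    rcases hf w hw with h | h <;> rw [h] <;> norm_num
  -- sums over subsets
  have hsub : ∀ T ⊆ S, (T.card : ℚ) * (1/4) ≤ ∑ w ∈ T, (1 - (1:ℚ) / c w) / f w := fun T hT => by
    have := Finset.card_nsmul_le_sum T (fun w => (1 - (1:ℚ) / c w) / f w) (1/4)
      (fun w hw => hterm w (hT hw))
    simpa using this
  have hone : ∀ T ⊆ S, ∑ w ∈ T, (1 - (1:ℚ) / c w) / f w < 1/2 →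
      T = ∅ ∨ ∃ d, T = {d} := fun T hT h => by
    have h3 := hsub T hT
    have : (T.card : ℚ) < 2 := by linarith
    have : T.card < 2 := by exact_mod_cast this
    rcases Nat.lt_or_ge 0 T.card with h0 | h0
    · right; exact Finset.card_eq_one.mp (by omega)
    · left; exact Finset.card_eq_zero.mp (by omega)
  obtain ⟨a, ha⟩ : (S.filter E).Nonempty := by
    by_contra hne
    rw [Finset.not_nonempty_iff_eq_empty] at hne
    rw [hne] at h1; simp at h1
  have haS := (Finset.mem_filter.mp ha).1
  have haE := hE a haS (Finset.mem_filter.mp ha).2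
  have hca := hc a haS
  have hcaq : (0:ℚ) < c a := by exact_mod_cast (by omega)
  have h2' := Finset.add_sum_erase S (fun w => (1 - (1:ℚ) / c w) / f w) haS
  rw [h2] at h2'
  rcases hf a haS with fa | fa
  · rw [fa] at h2'
    push_cast at h2'
    have hci' := hci a haS
    rcases hone (S.erase a) (Finset.erase_subset _ _) (by linarith) with he | ⟨d, hd⟩
    · rw [he] at h2'
      simp only [Finset.sum_empty] at h2'
      have : (N:ℚ) = c a := by field_simp at h2'; linarith
      have : N = c a := by exact_mod_cast this
      left; exact ⟨a, haS, by omega⟩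
    · rw [hd, Finset.sum_singleton] at h2'
      have hdS : d ∈ S := Finset.mem_of_mem_erase (hd ▸ Finset.mem_singleton_self d)
      have htd := hterm d hdS
      have h4 : (1:ℚ)/4 < 1/ c a := by linarith
      have h4' : c a < 4 := by
        have := lt_of_one_div_lt_one_div (by norm_num) h4
        exact_mod_cast this
      have h2a : c a = 2 := by obtain ⟨m, hm⟩ := haE; omega
      have hcd := hc d hdS
      have hcdq : (0:ℚ) < c d := by exact_mod_cast (by omega)
      have hci'' := hci d hdS
      rw [h2a] at h2'
      push_cast at h2'
      rcases hf d hdS with fd | fd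
      · rw [fd] at h2'; push_cast at h2'; linarith
      · rw [fd] at h2'; push_cast at h2'
        have : (N:ℚ) = 2 * c d := by field_simp at h2'; linarith
        have : N = 2 * c d := by exact_mod_cast this
        left; exact ⟨d, hdS, by omega⟩
  · obtain ⟨b, hb⟩ : ((S.filter E).erase a).Nonempty := by
      by_contra hne
      rw [Finset.not_nonempty_iff_eq_empty] at hne
      have := Finset.add_sum_erase (S.filter E) (fun w => (1:ℚ) / f w) ha
      rw [hne, h1] at this
      simp [fa] at this
    have hab : b ≠ a := Finset.ne_of_mem_erase hb
    have hbE' := Finset.mem_of_mem_erase hb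
    have hbS := (Finset.mem_filter.mp hbE').1
    have hbE := hE b hbS (Finset.mem_filter.mp hbE').2
    have hcb := hc b hbS
    have hcbq : (0:ℚ) < c b := by exact_mod_cast (by omega)
    have fb : f b = 2 := by
      rcases hf b hbS with fb | fb
      · exfalso
        have h3 : ∑ w ∈ ({a, b} : Finset Ω), (1:ℚ) / f w ≤ ∑ w ∈ S.filter E, (1:ℚ) / f w := by
          apply Finset.sum_le_sum_of_subset_of_nonneg
          · intro w hw
            simp only [Finset.mem_insert, Finset.mem_singleton] at hw
            rcases hw with rfl | rfl <;> assumption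
          · intros; positivity
        rw [Finset.sum_pair hab.symm, fa, fb, h1] at h3
        norm_num at h3
      · exact fb
    have hbS' : b ∈ S.erase a := Finset.mem_erase.mpr ⟨hab, hbS⟩
    have h3 := Finset.add_sum_erase (S.erase a) (fun w => (1 - (1:ℚ) / c w) / f w) hbS'
    rw [← h3] at h2'
    simp only [fa, fb] at h2'
    push_cast at h2'
    have hia := hci a haS
    have hib := hci b hbS
    have hsubR : (S.erase a).erase b ⊆ S :=
      (Finset.erase_subset _ _).trans (Finset.erase_subset _ _)
    rcases hone ((S.erase a).erase b) hsubR (by linarith) with he | ⟨d, hd⟩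
    · rw [he] at h2'
      simp only [Finset.sum_empty] at h2'
      exfalso
      have h5 := hfc a haS
      have h6 := hfc b hbS
      rw [fa] at h5; rw [fb] at h6
      have h5q : (2:ℚ) * c a ≤ N := by exact_mod_cast h5
      have h6q : (2:ℚ) * c b ≤ N := by exact_mod_cast h6
      have h7 := one_div_le_one_div_of_le (by positivity) h5q
      have h8 := one_div_le_one_div_of_le (by positivity) h6q
      have e1 : (1:ℚ)/(2 * c a) = (1 / c a) / 2 := by field_simp
      have e2 : (1:ℚ)/(2 * c b) = (1 / c b) / 2 := by field_simp
      rw [e1] at h7; rw [e2] at h8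
      linarith
    · rw [hd, Finset.sum_singleton] at h2'
      have hdS : d ∈ S := hsubR (hd ▸ Finset.mem_singleton_self d)
      have hcd := hc d hdS
      have hid := hci d hdS
      have fd : f d = 2 := by
        rcases hf d hdS with fd | fd
        · rw [fd] at h2'; push_cast at h2'; linarith
        · exact fd
      rw [fd] at h2'
      push_cast at h2'
      have key : (1:ℚ) - 1 / c d = 1 / c a + 1 / c b - 2 / N := by
        have e : (2:ℚ)/N = 2 * (1/N) := by ring
        rw [e]; linarith
      have e : (2:ℚ)/N = 2 * (1/N) := by ring
      rcases Nat.lt_or_ge (c a) 3 with h | h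
      · rcases arith_aux hN (by omega) hcb hbE hcd key with h | h | h
        · left; exact ⟨b, hbS, h⟩
        · left; exact ⟨d, hdS, h⟩
        · right; exact ⟨h.1, ⟨b, hbS, (Finset.mem_filter.mp hbE').2, h.2.1⟩, d, hdS, h.2.2, fd⟩
      rcases Nat.lt_or_ge (c b) 3 with h' | h'
      · rcases arith_aux (ca := c b) hN (by omega) hca haE hcd (by rw [key]; ring) with h | h | h
        · left; exact ⟨a, haS, h⟩
        · left; exact ⟨d, hdS, h⟩
        · right; exact ⟨h.1, ⟨a, haS, (Finset.mem_filter.mp ha).2, h.2.1⟩, d, hdS, h.2.2, fd⟩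
      exfalso
      have g1 : 4 ≤ c a := by obtain ⟨m, hm⟩ := haE; omega
      have g2 : 4 ≤ c b := by obtain ⟨m, hm⟩ := hbE; omega
      have g1q : (1:ℚ)/c a ≤ 1/4 := by
        apply one_div_le_one_div_of_le (by norm_num); exact_mod_cast g1
      have g2q : (1:ℚ)/c b ≤ 1/4 := by
        apply one_div_le_one_div_of_le (by norm_num); exact_mod_cast g2
      linarith
lemma orbit_count {G X : Type*} [Group G] [Finite G] [MulAction G X] (ax : G → X)
    (hax : ∀ k g, ax (k * g * k⁻¹) = k • ax g) (Q : G → Prop)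
    (hQ : ∀ k g, Q g → Q (k * g * k⁻¹)) (p : X) :
    Nat.card {h : G // ax h ∈ MulAction.orbit G p ∧ Q h} * Nat.card (MulAction.stabilizer G p) =
      Nat.card G * Nat.card {h : G // ax h = p ∧ Q h} := by
  have e1 : {h : G // ax h ∈ MulAction.orbit G p ∧ Q h} ≃
      Σ q : MulAction.orbit G p, {h : G // ax h = q ∧ Q h} :=
    { toFun := fun h => ⟨⟨ax h.1, h.2.1⟩, ⟨h.1, rfl, h.2.2⟩⟩
      invFun := fun s => ⟨s.2.1, by rw [s.2.2.1]; exact s.1.2, s.2.2.2⟩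
      left_inv := fun h => rfl
      right_inv := by 
        rintro ⟨q, ⟨h, h1, h2⟩⟩
        have hm : ax h ∈ MulAction.orbit G p := h1 ▸ q.2
        obtain rfl : q = ⟨ax h, hm⟩ := Subtype.ext h1.symm
        rfl }
  have e2 : ∀ q : MulAction.orbit G p,
      Nonempty ({h : G // ax h = q ∧ Q h} ≃ {h : G // ax h = p ∧ Q h}) := by
    rintro ⟨q, ⟨k, rfl⟩⟩
    exact ⟨{
      toFun := fun h => ⟨k⁻¹ * h.1 * k, by
        have := hax k⁻¹ h.1
        rw [inv_inv] at this
        rw [this, h.2.1]; simp, by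
        have := hQ k⁻¹ h.1 h.2.2
        rwa [inv_inv] at this⟩
      invFun := fun h => ⟨k * h.1 * k⁻¹, by rw [hax, h.2.1], hQ k _ h.2.2⟩
      left_inv := fun h => by ext; simp [mul_assoc]
      right_inv := fun h => by ext; simp [mul_assoc] }⟩
  have e3 : {h : G // ax h ∈ MulAction.orbit G p ∧ Q h} ≃
      MulAction.orbit G p × {h : G // ax h = p ∧ Q h} :=
    e1.trans ((Equiv.sigmaCongrRight fun q => (e2 q).some).trans (Equiv.sigmaEquivProd _ _))
  have e4 := Nat.card_congr (MulAction.orbitProdStabilizerEquivGroup G p)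
  rw [Nat.card_prod] at e4
  rw [Nat.card_congr e3, Nat.card_prod, ← e4]
  ring

/-- If products of elements of `B \ A` land in `A` then `[B : A] ≤ 2`. -/
lemma card_le_two_mul {G : Type*} [Group G] [Finite G] (A B : Subgroup G)
    (h : ∀ a ∈ B, ∀ b ∈ B, a ∉ A → b ∉ A → a * b ∈ A) :
    Nat.card B ≤ 2 * Nat.card A := by
  by_cases hBA : B ≤ A
  · have := Subgroup.card_le_of_le hBA
    omega
  · obtain ⟨b, hb, hbA⟩ := Set.not_subset.mp hBA
    have hsub : (B : Set G) ⊆ (A : Set G) ∪ (fun a => b⁻¹ * a) '' (A : Set G) := by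
      intro x hx
      by_cases hxA : x ∈ A
      · exact Or.inl hxA
      · exact Or.inr ⟨b * x, h b hb x hx hbA hxA, by simp⟩
    have h1 := Set.ncard_le_ncard hsub (Set.toFinite _)
    have h2 := Set.ncard_union_le (A : Set G) ((fun a => b⁻¹ * a) '' (A : Set G))
    have h3 := Set.ncard_image_le (f := fun a => b⁻¹ * a) (s := (A : Set G)) (Set.toFinite _)
    have h4 : (A : Set G).ncard = Nat.card A := rfl
    have h5 : (B : Set G).ncard = Nat.card B := rfl
    omega

lemma card_diff_half {G : Type*} [Group G] [Finite G] (K C : Subgroup G) (hK : K.index = 2)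
    (hC : ¬ C ≤ K) : Nat.card {h : G // h ∈ C ∧ h ∉ K} * 2 = Nat.card C ∧
      Nat.card (K ⊓ C : Subgroup G) * 2 = Nat.card C := by
  have hn := Subgroup.normal_of_index_eq_two hK
  have h1 : K.relIndex C ∣ 2 := hK ▸ Subgroup.relIndex_dvd_index_of_normal K C
  have h2 : K.relIndex C ≠ 1 := fun h => hC (Subgroup.relIndex_eq_one.mp h)
  have h3 : K.relIndex C = 2 := by
    rcases (Nat.dvd_prime Nat.prime_two).mp h1 with h | h
    · exact absurd h h2
    · exact h
  have h4 := (K.subgroupOf C).card_mul_index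
  have h5 : (K.subgroupOf C).index = 2 := h3
  have h6 : Nat.card (K.subgroupOf C) = Nat.card (K ⊓ C : Subgroup G) := by
    rw [← Subgroup.inf_subgroupOf_right]
    exact Nat.card_congr (Subgroup.subgroupOfEquivOfLe inf_le_right).toEquiv
  have h7 : ({h : G | h ∈ C ∧ h ∉ K}).ncard + (K ⊓ C : Subgroup G).carrier.ncard =
      (C : Set G).ncard := by
    rw [← Set.ncard_union_eq]
    · congr 1
      ext x
      simp [Subgroup.mem_inf]
      tauto
    · rw [Set.disjoint_left]
      rintro x hx hx'
      exact hx.2 (Subgroup.mem_inf.mp hx').1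
  have h8 : (C : Set G).ncard = Nat.card C := rfl
  have h9 : (K ⊓ C : Subgroup G).carrier.ncard = Nat.card (K ⊓ C : Subgroup G) := rfl
  have h10 : ({h : G | h ∈ C ∧ h ∉ K}).ncard = Nat.card {h : G // h ∈ C ∧ h ∉ K} := rfl
  rw [h5, h6] at h4
  rw [h8, h9, h10] at h7
  omega

lemma card_diff {G : Type*} [Group G] [Finite G] (Z C : Subgroup G) (hC : Z ≤ C) :
    Nat.card {h : G // h ∈ C ∧ h ∉ Z} + Nat.card Z = Nat.card C := by
  have h7 : ({h : G | h ∈ C ∧ h ∉ Z}).ncard + (Z : Set G).ncard = (C : Set G).ncard := 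
    Set.ncard_sdiff_add_ncard_of_subset (s := (Z : Set G)) (t := (C : Set G)) hC
  exact h7

/-- Conjugation action of a group on its subgroups. -/
@[reducible] def conjActSub (G : Type*) [Group G] : MulAction G (Subgroup G) where
  smul g H := H.map (MulAut.conj g).toMonoidHom
  one_smul H := by
    change H.map _ = H
    ext x; simp [Subgroup.mem_map]
  mul_smul a b H := by
    change H.map _ = (H.map _).map _
    rw [Subgroup.map_map]
    congr 1
    ext x; simp

section abs
open Subgroup
variable {G : Type*} [Group G]

lemma mem_cz {x y : G} : y ∈ centralizer ({x} : Set G) ↔ Commute x y := by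
  rw [mem_centralizer_iff]; simp [Commute, SemiconjBy]

lemma not_center_conj {g : G} (k : G) (h : g ∉ center G) : k * g * k⁻¹ ∉ center G := by
  intro h'
  apply h
  have := (inferInstance : (center G).Normal).conj_mem _ h' k⁻¹
  simpa [mul_assoc] using this

lemma center_le_cz (x : G) : center G ≤ centralizer ({x} : Set G) := by
  intro y hy
  rw [mem_cz]
  exact (mem_center_iff.mp hy x)

lemma cz_conj (k g : G) : centralizer ({k * g * k⁻¹} : Set G) =
    (centralizer ({g} : Set G)).map (MulAut.conj k).toMonoidHom := by
  ext y
  rw [mem_cz, mem_map]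
  constructor
  · intro h
    refine ⟨k⁻¹ * y * k, ?_, by simp [mul_assoc]⟩
    rw [mem_cz]
    have := h.conj k⁻¹
    simpa [mul_assoc, Commute, SemiconjBy] using congrArg (fun t => k⁻¹ * t * k) h.eq
  · rintro ⟨w, hw, rfl⟩
    rw [mem_cz] at hw
    have := congrArg (fun t => k * t * k⁻¹) hw.eq
    simpa [mul_assoc, Commute, SemiconjBy] using this

/-- Centralizers of noncentral elements are abelian. -/
def HCA (G : Type*) [Group G] : Prop :=
  ∀ x ∉ center G, ∀ y z : G, Commute x y → Commute x z → Commute y z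

lemma cz_eq (hCA : HCA G) {x y : G} (hx : x ∉ center G) (hy : y ∉ center G) (h : Commute x y) :
    centralizer ({y} : Set G) = centralizer ({x} : Set G) := by
  ext w
  rw [mem_cz, mem_cz]
  exact ⟨fun h' => hCA y hy x w h.symm h', fun h' => hCA x hx y w h h'⟩

lemma cz_eq_iff (hCA : HCA G) {x y : G} (hx : x ∉ center G) (hy : y ∉ center G) :
    centralizer ({y} : Set G) = centralizer ({x} : Set G) ↔ y ∈ centralizer ({x} : Set G) := by
  constructor
  · intro h; rw [← h, mem_cz]
  · intro h; exact cz_eq hCA hx hy (mem_cz.mp h)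

/-- Normalizers of centralizers of noncentral elements: index at most two. -/
def HN (G : Type*) [Group G] : Prop :=
  ∀ x ∉ center G, ∀ k k' : G, Commute x (k * x * k⁻¹) → Commute x (k' * x * k'⁻¹) →
    ¬ Commute x k → ¬ Commute x k' → Commute x (k * k')

attribute [local instance] conjActSub

lemma smul_cz (k g : G) : k • centralizer ({g} : Set G) = centralizer ({k * g * k⁻¹} : Set G) :=
  (cz_conj k g).symm

lemma mem_stab (hCA : HCA G) {x : G} (hx : x ∉ center G) {k : G} :
    k ∈ MulAction.stabilizer G (centralizer ({x} : Set G)) ↔ Commute x (k * x * k⁻¹) := by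
  rw [MulAction.mem_stabilizer_iff, smul_cz, cz_eq_iff hCA hx (not_center_conj k hx), mem_cz]

lemma cz_le_stab (hCA : HCA G) {x : G} (hx : x ∉ center G) :
    centralizer ({x} : Set G) ≤ MulAction.stabilizer G (centralizer ({x} : Set G)) := by
  intro k hk
  rw [mem_stab hCA hx]
  rw [mem_cz] at hk
  have : k * x * k⁻¹ = x := by rw [← hk.eq]; simp
  rw [this]

lemma stab_card [Finite G] (hCA : HCA G) (hN : HN G) {x : G} (hx : x ∉ center G) :
    ∃ f : ℕ, (f = 1 ∨ f = 2) ∧ Nat.card (MulAction.stabilizer G (centralizer ({x} : Set G))) =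
      f * Nat.card (centralizer ({x} : Set G)) := by
  obtain ⟨f, hf⟩ := card_dvd_of_le (cz_le_stab hCA hx)
  have h2 := card_le_two_mul (centralizer ({x} : Set G))
    (MulAction.stabilizer G (centralizer ({x} : Set G))) (by
      intro a ha b hb ha' hb'
      rw [mem_stab hCA hx] at ha hb
      rw [mem_cz] at ha' hb' ⊢
      exact hN x hx a b ha hb ha' hb')
  have hp : 0 < Nat.card (centralizer ({x} : Set G)) := Nat.card_pos
  have hp' : 0 < Nat.card (MulAction.stabilizer G (centralizer ({x} : Set G))) := Nat.card_pos
  refine ⟨f, ?_, by rw [hf, mul_comm]⟩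
  rw [hf, mul_comm] at h2
  have := Nat.le_of_mul_le_mul_right h2 hp
  have : f ≠ 0 := by rintro rfl; omega
  omega

lemma cz_card [Finite G] {x : G} (hx : x ∉ center G) :
    ∃ c : ℕ, 2 ≤ c ∧ Nat.card (centralizer ({x} : Set G)) = c * Nat.card (center G) := by
  obtain ⟨c, hc⟩ := card_dvd_of_le (center_le_cz x)
  refine ⟨c, ?_, by rw [hc, mul_comm]⟩
  have h1 := card_diff (center G) _ (center_le_cz x)
  have hp' : 0 < Nat.card {h : G // h ∈ centralizer ({x} : Set G) ∧ h ∉ center G} := by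
    have : Nonempty {h : G // h ∈ centralizer ({x} : Set G) ∧ h ∉ center G} :=
      ⟨⟨x, by rw [mem_cz], hx⟩⟩
    exact Nat.card_pos
  rw [hc] at h1
  by_contra hlt
  have : c = 0 ∨ c = 1 := by omega
  rcases this with rfl | rfl <;> omega

lemma class_count [Finite G] (hCA : HCA G) {x : G} (hx : x ∉ center G) (Q : G → Prop)
    (hQ : ∀ k g, Q g → Q (k * g * k⁻¹)) (hQZ : ∀ g, Q g → g ∉ center G) :
    Nat.card {h : G // centralizer ({h} : Set G) ∈
        MulAction.orbit G (centralizer ({x} : Set G)) ∧ Q h} *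
      Nat.card (MulAction.stabilizer G (centralizer ({x} : Set G))) =
      Nat.card G * Nat.card {h : G // h ∈ centralizer ({x} : Set G) ∧ Q h} := by
  rw [orbit_count (fun g : G => centralizer ({g} : Set G)) (fun k g => (smul_cz k g).symm) Q hQ]
  congr 1
  apply Nat.card_congr
  apply Equiv.subtypeEquivRight
  intro h
  constructor
  · rintro ⟨h1, h2⟩; exact ⟨(cz_eq_iff hCA hx (hQZ h h2)).mp h1, h2⟩
  · rintro ⟨h1, h2⟩; exact ⟨(cz_eq_iff hCA hx (hQZ h h2)).mpr h1, h2⟩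

lemma count_main [Finite G] (hCA : HCA G) (hN : HN G) (K : Subgroup G) (hK : K.index = 2)
    (hZK : center G ≤ K) :
    (∃ x ∉ center G, Nat.card G ≤ 2 * Nat.card (centralizer ({x} : Set G))) ∨
    (Nat.card G = 24 * Nat.card (center G) ∧
      (∃ b ∉ K, Nat.card (centralizer ({b} : Set G)) = 4 * Nat.card (center G)) ∧
      ∃ d ∉ center G, Nat.card (centralizer ({d} : Set G)) = 3 * Nat.card (center G) ∧
        Nat.card (MulAction.stabilizer G (centralizer ({d} : Set G))) =
          6 * Nat.card (center G)) := by
  classical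
  have := Fintype.ofFinite G
  have hKn := normal_of_index_eq_two hK
  let cl : G → MulAction.orbitRel.Quotient G (Subgroup G) :=
    fun g => Quotient.mk _ (centralizer ({g} : Set G))
  have hcl : ∀ g h, cl g = cl h ↔
      centralizer ({g} : Set G) ∈ MulAction.orbit G (centralizer ({h} : Set G)) := by
    intro g h
    rw [← MulAction.orbitRel_apply]
    exact Quotient.eq
  let P : Finset G := Finset.univ.filter (fun g => g ∉ center G)
  let S := P.image cl
  have hrep : ∀ w : MulAction.orbitRel.Quotient G (Subgroup G), ∃ x : G,
      w ∈ S → x ∉ center G ∧ cl x = w := by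
    intro w
    by_cases hw : w ∈ S
    · obtain ⟨x, hx, hxw⟩ := Finset.mem_image.mp hw
      exact ⟨x, fun _ => ⟨(Finset.mem_filter.mp hx).2, hxw⟩⟩
    · exact ⟨1, fun h => absurd h hw⟩
  choose rep hrep using hrep
  have hcf : ∀ w, ∃ c : ℕ, w ∈ S → 2 ≤ c ∧
      Nat.card (centralizer ({rep w} : Set G)) = c * Nat.card (center G) := by
    intro w
    by_cases hw : w ∈ S
    · obtain ⟨c, hc⟩ := cz_card (hrep w hw).1
      exact ⟨c, fun _ => hc⟩
    · exact ⟨0, fun h => absurd h hw⟩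
  choose c hc using hcf
  have hff : ∀ w, ∃ f : ℕ, w ∈ S → (f = 1 ∨ f = 2) ∧
      Nat.card (MulAction.stabilizer G (centralizer ({rep w} : Set G))) =
      f * Nat.card (centralizer ({rep w} : Set G)) := by
    intro w
    by_cases hw : w ∈ S
    · obtain ⟨c, hc⟩ := stab_card hCA hN (hrep w hw).1
      exact ⟨c, fun _ => hc⟩
    · exact ⟨0, fun h => absurd h hw⟩
  choose f hf using hff
  set z := Nat.card (center G) with hz
  have hzpos : 0 < z := Nat.card_pos
  have hzq : (0:ℚ) < z := by exact_mod_cast hzpos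
  obtain ⟨N, hNz⟩ := card_subgroup_dvd_card (center G)
  rw [← hz] at hNz
  have hGpos : 0 < Nat.card G := Nat.card_pos
  have hNpos : 0 < N := Nat.pos_of_ne_zero (by rintro rfl; omega)
  have hNq : (0:ℚ) < N := by exact_mod_cast hNpos
  let E : MulAction.orbitRel.Quotient G (Subgroup G) → Prop :=
    fun w => ¬ centralizer ({rep w} : Set G) ≤ K
  have hfib : ∀ (Q : G → Prop) w, w ∈ S → (∀ g, Q g → g ∉ center G) →
      ((Finset.univ.filter Q).filter (fun g => cl g = w)).card =
      Nat.card {h : G // centralizer ({h} : Set G) ∈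
        MulAction.orbit G (centralizer ({rep w} : Set G)) ∧ Q h} := by
    intro Q w hw hQ
    rw [Nat.card_eq_fintype_card, Fintype.card_subtype, Finset.filter_filter]
    congr 1
    ext g
    simp only [Finset.mem_filter, Finset.mem_univ, true_and]
    rw [← hcl, (hrep w hw).2]
    tauto
  have hsum : ∀ (Q : G → Prop), (∀ g, Q g → g ∉ center G) →
      Nat.card {h : G // Q h} = ∑ w ∈ S, Nat.card {h : G // centralizer ({h} : Set G) ∈
        MulAction.orbit G (centralizer ({rep w} : Set G)) ∧ Q h} := by
    intro Q hQ
    rw [Nat.card_eq_fintype_card, Fintype.card_subtype,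
      Finset.card_eq_sum_card_fiberwise (f := cl) (t := S)]
    · exact Finset.sum_congr rfl fun w hw => hfib Q w hw hQ
    · intro g hg
      have hg' := (Finset.mem_filter.mp hg).2
      exact Finset.mem_image_of_mem cl (Finset.mem_filter.mpr ⟨Finset.mem_univ _, hQ g hg'⟩)
  have hfq : ∀ w ∈ S, (0:ℚ) < f w := fun w hw => by
    rcases (hf w hw).1 with h | h <;> rw [h] <;> norm_num
  have hcq : ∀ w ∈ S, (0:ℚ) < c w := fun w hw => by
    have := (hc w hw).1
    exact_mod_cast (by omega : 0 < c w)
  -- the count of elements outside `K`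
  have h1 : ∑ w ∈ S.filter E, (1:ℚ) / f w = 1 := by
    have hs := hsum (fun g => g ∉ K) (fun g hg hg' => hg (hZK hg'))
    have hhalf := (card_diff_half K ⊤ hK (by
      intro h
      have : K = ⊤ := top_le_iff.mp h
      rw [this] at hK; simp at hK)).1
    have e : Nat.card {h : G // h ∈ (⊤ : Subgroup G) ∧ h ∉ K} =
        Nat.card {h : G // h ∉ K} := by
      apply Nat.card_congr
      apply Equiv.subtypeEquivRight
      simp
    rw [e, card_top] at hhalf
    have hs' : (Nat.card {h : G // h ∉ K} : ℚ) =
        ∑ w ∈ S, if E w then ((Nat.card G : ℚ) / 2) * (1 / f w) else 0 := by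
      rw [hs, Nat.cast_sum]
      apply Finset.sum_congr rfl
      intro w hw
      have hcc := class_count hCA (hrep w hw).1 (fun g => g ∉ K)
        (fun k g hg hg' => hg (by
          have := hKn.conj_mem _ hg' k⁻¹
          simpa [mul_assoc] using this)) (fun g hg hg' => hg (hZK hg'))
      rw [(hf w hw).2] at hcc
      have hcp : (0:ℚ) < Nat.card (centralizer ({rep w} : Set G)) := by
        exact_mod_cast Nat.card_pos
      split_ifs with hE
      · have hd := (card_diff_half K _ hK hE).1
        have hcc' := congrArg (Nat.cast (R := ℚ)) hcc
        have hd' := congrArg (Nat.cast (R := ℚ)) hd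
        push_cast at hcc' hd'
        have := hfq w hw
        field_simp
        apply mul_right_cancel₀ hcp.ne'
        rw [← hd'] at hcc' ⊢
        linarith
      · have hempty : IsEmpty {h : G // h ∈ centralizer ({rep w} : Set G) ∧ h ∉ K} :=
          ⟨fun h => h.2.2 (not_not.mp hE h.2.1)⟩
        rw [Nat.card_of_isEmpty (α := {h : G // h ∈ centralizer ({rep w} : Set G) ∧ h ∉ K}),
          mul_zero, mul_eq_zero] at hcc
        rcases hcc with h | h
        · exact_mod_cast h
        · have := hfq w hw
          exfalso
          have h' := congrArg (Nat.cast (R := ℚ)) h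
          push_cast at h'
          nlinarith [mul_pos this hcp]
    rw [← Finset.sum_filter, ← Finset.mul_sum] at hs'
    have hh := congrArg (Nat.cast (R := ℚ)) hhalf
    push_cast at hh
    rw [hs'] at hh
    have hGq : (0:ℚ) < Nat.card G := by exact_mod_cast hGpos
    apply mul_left_cancel₀ hGq.ne'
    linarith
  have h2 : ∑ w ∈ S, (1 - (1:ℚ) / c w) / f w = 1 - 1 / N := by
    have hs := hsum (fun g => g ∉ center G) (fun g hg => hg)
    have hhalf := card_diff (center G) ⊤ le_top
    have e : Nat.card {h : G // h ∈ (⊤ : Subgroup G) ∧ h ∉ center G} =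
        Nat.card {h : G // h ∉ center G} := by
      apply Nat.card_congr
      apply Equiv.subtypeEquivRight
      simp
    rw [e, card_top, ← hz, hNz] at hhalf
    have hs' : (Nat.card {h : G // h ∉ center G} : ℚ) =
        ∑ w ∈ S, ((z:ℚ) * N) * ((1 - (1:ℚ) / c w) / f w) := by
      rw [hs, Nat.cast_sum]
      apply Finset.sum_congr rfl
      intro w hw
      have hcc := class_count hCA (hrep w hw).1 (fun g => g ∉ center G)
        (fun k g hg => not_center_conj k hg) (fun g hg => hg)
      have hd := card_diff (center G) _ (center_le_cz (rep w))
      rw [(hf w hw).2, hNz, (hc w hw).2] at hcc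
      rw [(hc w hw).2, ← hz] at hd
      have hcc' := congrArg (Nat.cast (R := ℚ)) hcc
      have hd' := congrArg (Nat.cast (R := ℚ)) hd
      push_cast at hcc' hd'
      rw [← eq_sub_iff_add_eq] at hd'
      rw [hd'] at hcc'
      have a1 := hfq w hw
      have a2 := hcq w hw
      field_simp
      apply mul_right_cancel₀ hzq.ne'
      linarith
    rw [← Finset.mul_sum] at hs'
    have hh := congrArg (Nat.cast (R := ℚ)) hhalf
    push_cast at hh
    rw [hs'] at hh
    have : ((z:ℚ) * N) * (∑ w ∈ S, (1 - (1:ℚ) / c w) / f w) = (z * N) * (1 - 1 / N) := by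
      have e3 : ((z:ℚ) * N) * (1 - 1 / N) = z * N - z := by field_simp
      rw [e3]
      linarith
    exact mul_left_cancel₀ (by positivity) this
  have hEven : ∀ w ∈ S, E w → Even (c w) := by
    intro w hw hE
    have hd := (card_diff_half K _ hK hE).2
    obtain ⟨m, hm⟩ := card_dvd_of_le (le_inf hZK (center_le_cz (rep w)))
    rw [hm, (hc w hw).2, ← hz] at hd
    refine ⟨m, ?_⟩
    apply Nat.eq_of_mul_eq_mul_right hzpos
    linarith
  have hfc : ∀ w ∈ S, f w * c w ≤ N := by
    intro w hw
    have := Nat.le_of_dvd hGpos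
      (card_subgroup_dvd_card (MulAction.stabilizer G (centralizer ({rep w} : Set G))))
    rw [(hf w hw).2, (hc w hw).2, hNz] at this
    apply Nat.le_of_mul_le_mul_right _ hzpos
    linarith
  rcases arith_main S E c f N hNpos (fun w hw => (hc w hw).1) hEven
    (fun w hw => (hf w hw).1) hfc h1 h2 with ⟨w, hw, h⟩ | ⟨h24, ⟨b, hb, hbE, hb4⟩, d, hd, hd3, hfd⟩
  · left
    refine ⟨rep w, (hrep w hw).1, ?_⟩
    rw [hNz, (hc w hw).2]
    nlinarith
  · right
    refine ⟨by rw [hNz, h24, mul_comm], ?_, rep d, (hrep d hd).1, ?_, ?_⟩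
    · obtain ⟨g, hg, hgK⟩ := Set.not_subset.mp hbE
      refine ⟨g, hgK, ?_⟩
      rw [(cz_eq_iff hCA (hrep b hb).1 (fun h => hgK (hZK h))).mpr hg, (hc b hb).2, hb4]
    · rw [(hc d hd).2, hd3]
    · rw [(hf d hd).2, (hc d hd).2, hd3, hfd]; ring

lemma pow_mem_center_of_card [Finite G] {y : G} {n : ℕ}
    (hcard : Nat.card (centralizer ({y} : Set G)) = n * Nat.card (center G))
    {w : G} (hw : Commute y w) : w ^ n ∈ center G := by
  have h4 := ((center G).subgroupOf (centralizer ({y} : Set G))).card_mul_index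
  have h6 : Nat.card ((center G).subgroupOf (centralizer ({y} : Set G))) = Nat.card (center G) :=
    Nat.card_congr (Subgroup.subgroupOfEquivOfLe (center_le_cz y)).toEquiv
  have hp : 0 < Nat.card (center G) := Nat.card_pos
  rw [h6, hcard, mul_comm] at h4
  have h5 := Nat.eq_of_mul_eq_mul_right hp h4
  have h7 := ((center G).subgroupOf (centralizer ({y} : Set G))).pow_index_mem
    ⟨w, mem_cz.mpr hw⟩
  rw [h5] at h7
  exact h7

lemma s4_hom [Finite G] (hCA : HCA G) (hN : HN G)
    (hG : Nat.card G = 24 * Nat.card (center G)) {d : G} (hd : d ∉ center G)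
    (hcd : Nat.card (centralizer ({d} : Set G)) = 3 * Nat.card (center G))
    (hsd : Nat.card (MulAction.stabilizer G (centralizer ({d} : Set G))) =
          6 * Nat.card (center G)) :
    ∃ φ : G →* Equiv.Perm (Fin 4), Function.Surjective φ ∧ φ.ker = center G := by
  have hz : 0 < Nat.card (center G) := Nat.card_pos
  have hX : Nat.card (MulAction.orbit G (centralizer ({d} : Set G))) = 4 := by
    have e4 := Nat.card_congr (MulAction.orbitProdStabilizerEquivGroup G (centralizer ({d} : Set G)))
    rw [Nat.card_prod, hsd, hG] at e4
    apply Nat.eq_of_mul_eq_mul_right hz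
    linarith
  have : Finite (MulAction.orbit G (centralizer ({d} : Set G))) :=
    Nat.finite_of_card_ne_zero (by omega)
  let φ0 := MulAction.toPermHom G (MulAction.orbit G (centralizer ({d} : Set G)))
  have hker1 : ∀ k ∈ φ0.ker, ∀ j : G, Commute (j * d * j⁻¹) (k * (j * d * j⁻¹) * k⁻¹) := by
    intro k hk j
    rw [MonoidHom.mem_ker] at hk
    have h1 := Equiv.congr_fun hk ⟨j • centralizer ({d} : Set G), MulAction.mem_orbit _ _⟩
    have h2 := congrArg Subtype.val h1
    rw [← mem_stab hCA (not_center_conj j hd), MulAction.mem_stabilizer_iff, ← smul_cz j]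
    exact h2
  obtain ⟨j, hj⟩ : ∃ j : G, ¬ Commute d (j * d * j⁻¹) := by
    by_contra hall
    push Not at hall
    have : MulAction.stabilizer G (centralizer ({d} : Set G)) = ⊤ := by
      rw [eq_top_iff]
      intro k _
      rw [mem_stab hCA hd]
      exact hall k
    rw [this, card_top, hG] at hsd
    omega
  have hconj : ∀ i a b : G, Commute (i * a * i⁻¹) (i * b * i⁻¹) ↔ Commute a b := by
    intro i a b
    constructor
    · intro h
      have := congrArg (fun t => i⁻¹ * t * i) h.eq
      simpa [mul_assoc, Commute, SemiconjBy] using this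
    · intro h
      have := congrArg (fun t => i * t * i⁻¹) h.eq
      simpa [mul_assoc, Commute, SemiconjBy] using this
  have hcube : ∀ i w : G, Commute (i * d * i⁻¹) w → w ^ 3 ∈ center G := by
    intro i w h
    have h1 : Commute d (i⁻¹ * w * i) := by
      rw [← hconj i]
      simpa [mul_assoc] using h
    have h2 := pow_mem_center_of_card hcd h1
    have h3 : (i⁻¹ * w * i) ^ 3 = i⁻¹ * w ^ 3 * i := by
      have := conj_pow (a := i⁻¹) (b := w) (i := 3)
      simpa using this
    rw [h3] at h2
    have := (inferInstance : (center G).Normal).conj_mem _ h2 i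
    simpa [mul_assoc] using this
  -- squares
  have case1 : ∀ k ∈ φ0.ker, k ∉ center G → ∀ i, ¬ Commute (i * d * i⁻¹) k := by
    intro k hk hkc i hc
    set y := i * d * i⁻¹ with hy
    set y' := (i * j) * d * (i * j)⁻¹ with hy'
    have hyy : ¬ Commute y y' := by
      have : y' = i * (j * d * j⁻¹) * i⁻¹ := by rw [hy']; group
      rw [this, hy, hconj]; exact hj
    have hyc : y' ∉ center G := not_center_conj _ hd
    have h1 : ¬ Commute y' k := fun h => hyy (hCA k hkc y y' hc.symm h.symm)
    have h2 := hN y' hyc k k (hker1 k hk _) (hker1 k hk _) h1 h1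
    have h3 : Commute y (k * k) := hc.mul_right hc
    have h4 : k * k ∈ center G := by
      by_contra h4
      exact hyy (hCA _ h4 y y' h3.symm h2.symm)
    have h5 := hcube i k hc
    apply hkc
    have : k = (k * k)⁻¹ * k ^ 3 := by group
    rw [this]
    exact mul_mem (inv_mem h4) h5
  have hker : φ0.ker = center G := by
    apply le_antisymm
    · intro k hk
      by_contra hkc
      have hn : ∀ i, ¬ Commute (i * d * i⁻¹) k := case1 k hk hkc
      have hn1 : ¬ Commute d k := by simpa using hn 1
      have hk1 : Commute d (k * d * k⁻¹) := by simpa using hker1 k hk 1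
      have h1 := hN d hd k k hk1 hk1 hn1 hn1
      have h2 := hN _ (not_center_conj j hd) k k (hker1 k hk j) (hker1 k hk j) (hn j) (hn j)
      have h4 : k * k ∈ center G := by
        by_contra h4
        exact hj (hCA _ h4 _ _ h1.symm h2.symm)
      set ζ := k * d * k⁻¹ * d⁻¹ with hζ
      have hζk : ζ ∈ φ0.ker := by
        have : ζ = k * (d * k⁻¹ * d⁻¹) := by rw [hζ]; group
        rw [this]
        exact mul_mem hk ((inferInstance : φ0.ker.Normal).conj_mem _ (inv_mem hk) d)
      have hζd : Commute d ζ := hk1.mul_right (Commute.refl d).inv_right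
      have hζc : ζ ∈ center G := by
        by_contra h
        apply case1 ζ hζk h 1
        simpa using hζd
      have e1 : k * d * k⁻¹ = ζ * d := by rw [hζ]; group
      have hd3 := hcube 1 d (by simp)
      have e3 : ζ ^ 3 = 1 := by
        have a1 : (k * d * k⁻¹) ^ 3 = d ^ 3 := by
          rw [conj_pow, mem_center_iff.mp hd3 k]; group
        rw [e1, hζd.symm.mul_pow] at a1
        exact mul_eq_right.mp a1
      have e2 : ζ ^ 2 = 1 := by
        have a1 : k * (k * d * k⁻¹) * k⁻¹ = d := by
          have : k * (k * d * k⁻¹) * k⁻¹ = (k * k) * d * (k * k)⁻¹ := by group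
          rw [this, ← h1.eq]; group
        have a2 : k * (ζ * d) * k⁻¹ = ζ * (k * d * k⁻¹) := by
          rw [← mul_assoc, mem_center_iff.mp hζc k]; group
        rw [e1, a2, e1, ← mul_assoc, ← pow_two] at a1
        exact mul_eq_right.mp a1
      have e0 : ζ = 1 := by
        have : ζ = ζ ^ 3 * (ζ ^ 2)⁻¹ := by group
        rw [this, e3, e2]; simp
      rw [e0, one_mul] at e1
      apply hn1
      have : k * d = d * k := by
        rw [← mul_inv_eq_iff_eq_mul]; exact e1
      exact this.symm
    · intro k hk
      rw [MonoidHom.mem_ker]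
      ext ⟨q, ⟨i, rfl⟩⟩ : 2
      change k • (i • centralizer ({d} : Set G)) = i • centralizer ({d} : Set G)
      rw [smul_cz i, smul_cz]
      congr 2
      rw [← mem_center_iff.mp hk]; group
  let e := (Finite.equivFinOfCardEq hX).permCongrHom
  refine ⟨e.toMonoidHom.comp φ0, ?_, ?_⟩
  · have hk' : (e.toMonoidHom.comp φ0).ker = center G := by
      rw [← hker]
      ext x
      simp [MonoidHom.mem_ker]
    rw [← MonoidHom.range_eq_top]
    apply eq_top_of_card_eq
    have h1 := (e.toMonoidHom.comp φ0).ker.card_mul_index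
    rw [index_ker, hk', hG, mul_comm] at h1
    rw [Nat.eq_of_mul_eq_mul_right hz h1]
    simp [Nat.card_eq_fintype_card, Fintype.card_perm]
    rfl
  · rw [← hker]
    ext x
    simp [MonoidHom.mem_ker]

lemma four_elt [Finite G] (K : Subgroup G) (hK : K.index = 2) (hZK : center G ≤ K)
    (hsq : ∀ x y : G, Commute x y → x ∉ center G → y ∉ center G → x ^ 2 ∈ center G →
      y ^ 2 ∈ center G → x * y ∈ center G)
    {b : G} (hb : b ∉ K) (hcb : Nat.card (centralizer ({b} : Set G)) = 4 * Nat.card (center G)) :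
    ∃ g ∉ K, g ^ 2 ∉ center G ∧ g ^ 4 ∈ center G := by
  have hz : 0 < Nat.card (center G) := Nat.card_pos
  by_cases hb2 : b ^ 2 ∈ center G
  · have hE : ¬ centralizer ({b} : Set G) ≤ K := fun h => hb (h (mem_cz.mpr (Commute.refl b)))
    have h1 := (card_diff_half K _ hK hE).2
    have hle : ¬ (K ⊓ centralizer ({b} : Set G)) ≤ center G := by
      intro h
      have := card_le_of_le h
      omega
    obtain ⟨h, hh, hhc⟩ := Set.not_subset.mp hle
    obtain ⟨hhK, hhb⟩ := mem_inf.mp hh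
    rw [mem_cz] at hhb
    have hbh : b * h ∉ K := by
      rw [mul_mem_iff_of_index_two hK]; tauto
    refine ⟨b * h, hbh, ?_, pow_mem_center_of_card hcb ((Commute.refl b).mul_right hhb)⟩
    rw [hhb.mul_pow]
    intro h3
    have h4 : h ^ 2 ∈ center G := by
      have := mul_mem (inv_mem hb2) h3
      simpa using this
    exact hbh (hZK (hsq b h hhb (fun h => hb (hZK h)) hhc hb2 h4))
  · exact ⟨b, hb, hb2, pow_mem_center_of_card hcb (Commute.refl b)⟩

theorem abs_main [Finite G] (hCA : HCA G) (hN : HN G) (K : Subgroup G) (hK : K.index = 2)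
    (hZK : center G ≤ K)
    (hsq : ∀ x y : G, Commute x y → x ∉ center G → y ∉ center G → x ^ 2 ∈ center G →
      y ^ 2 ∈ center G → x * y ∈ center G) :
    (∃ x ∉ center G, Nat.card G ≤ 2 * Nat.card (centralizer ({x} : Set G))) ∨
    ((∃ φ : G →* Equiv.Perm (Fin 4), Function.Surjective φ ∧ φ.ker = center G) ∧
      (∃ g ∉ K, g ^ 2 ∉ center G ∧ g ^ 4 ∈ center G) ∧
      ∃ d ∉ center G, d ^ 3 ∈ center G) := by
  rcases count_main hCA hN K hK hZK with h | ⟨hG, ⟨b, hb, hcb⟩, d, hd, hcd, hsd⟩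
  · exact Or.inl h
  · exact Or.inr ⟨s4_hom hCA hN hG hd hcd hsd, four_elt K hK hZK hsq hb hcb, d, hd,
      pow_mem_center_of_card hcd (Commute.refl d)⟩

end abs

section mats
variable {F : Type*} [Field F]
set_option linter.unusedSectionVars false

/-- scalar matrices, entrywise -/
def Sc (A : Matrix (Fin 2) (Fin 2) F) : Prop := A 0 1 = 0 ∧ A 1 0 = 0 ∧ A 0 0 = A 1 1

/-- trace -/
def tr2 (A : Matrix (Fin 2) (Fin 2) F) : F := A 0 0 + A 1 1

/-- determinant -/
def dt2 (A : Matrix (Fin 2) (Fin 2) F) : F := A 0 0 * A 1 1 - A 0 1 * A 1 0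

/-- discriminant -/
def disc2 (A : Matrix (Fin 2) (Fin 2) F) : F := tr2 A ^ 2 - 4 * dt2 A

lemma mat_ext {A B : Matrix (Fin 2) (Fin 2) F} (h1 : A 0 0 = B 0 0) (h2 : A 0 1 = B 0 1)
    (h3 : A 1 0 = B 1 0) (h4 : A 1 1 = B 1 1) : A = B := by
  ext i j; fin_cases i <;> fin_cases j <;> assumption

lemma sc_iff {A : Matrix (Fin 2) (Fin 2) F} : Sc A ↔ ∃ c : F, A = c • 1 := by
  constructor
  · rintro ⟨h1, h2, h3⟩
    refine ⟨A 0 0, mat_ext ?_ ?_ ?_ ?_⟩ <;> simp [h1, h2, h3]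
  · rintro ⟨c, rfl⟩
    simp [Sc]

lemma comm_form {x y : Matrix (Fin 2) (Fin 2) F} (hx : ¬ Sc x) (h : x * y = y * x) :
    ∃ a b : F, y = a • 1 + b • x := by
  have h00 := congrFun (congrFun h 0) 0
  have h01 := congrFun (congrFun h 0) 1
  have h10 := congrFun (congrFun h 1) 0
  simp only [Matrix.mul_apply, Fin.sum_univ_two] at h00 h01 h10
  by_cases h1 : x 0 1 = 0
  · by_cases h2 : x 1 0 = 0
    · have h3 : x 0 0 - x 1 1 ≠ 0 := fun h3 => hx ⟨h1, h2, sub_eq_zero.mp h3⟩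
      refine ⟨y 0 0 - (y 0 0 - y 1 1) / (x 0 0 - x 1 1) * x 0 0,
        (y 0 0 - y 1 1) / (x 0 0 - x 1 1), mat_ext ?_ ?_ ?_ ?_⟩
      · simp
      · simp [h1]
        rw [h1] at h01
        apply mul_left_cancel₀ h3; linear_combination h01
      · simp [h2]
        rw [h2] at h10
        apply mul_left_cancel₀ h3; linear_combination -h10
      · simp
        field_simp
        ring
    · refine ⟨y 0 0 - y 1 0 / x 1 0 * x 0 0, y 1 0 / x 1 0, mat_ext ?_ ?_ ?_ ?_⟩
      · simp
      · simp [h1]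
        apply mul_left_cancel₀ h2; rw [h1] at h00; linear_combination -h00
      · simp
        field_simp
      · simp
        field_simp
        linear_combination -h10
  · refine ⟨y 0 0 - y 0 1 / x 0 1 * x 0 0, y 0 1 / x 0 1, mat_ext ?_ ?_ ?_ ?_⟩
    · simp
    · simp
      field_simp
    · simp
      field_simp
      linear_combination h00
    · simp
      field_simp
      linear_combination h01

lemma comm_trans {x y z : Matrix (Fin 2) (Fin 2) F} (hx : ¬ Sc x) (h : x * y = y * x)
    (h' : x * z = z * x) : y * z = z * y := by
  obtain ⟨a, b, rfl⟩ := comm_form hx h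
  obtain ⟨a', b', rfl⟩ := comm_form hx h'
  simp [add_mul, mul_add, smul_smul]
  rw [mul_comm a' a, mul_comm b' b, mul_comm b' a, mul_comm b a']
  abel

lemma sc_comm {x : Matrix (Fin 2) (Fin 2) F} (hx : Sc x) (y : Matrix (Fin 2) (Fin 2) F) :
    x * y = y * x := by
  obtain ⟨c, rfl⟩ := sc_iff.mp hx
  simp

/-- an element with the same trace and determinant commuting with `x` is `x` or `tr x - x`. -/
lemma same_or_conj {x y : Matrix (Fin 2) (Fin 2) F} (h2 : (2:F) ≠ 0) (hx : ¬ Sc x)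
    (hD : disc2 x ≠ 0) (h : x * y = y * x) (ht : tr2 y = tr2 x) (hd : dt2 y = dt2 x) :
    y = x ∨ y = tr2 x • 1 - x := by
  obtain ⟨a, b, rfl⟩ := comm_form hx h
  have h3 : (b ^ 2 - 1) * disc2 x = 0 := by
    have e : disc2 (a • 1 + b • x) = b ^ 2 * disc2 x := by
      simp [disc2, tr2, dt2]; ring
    have e' : disc2 (a • 1 + b • x) = disc2 x := by
      rw [disc2, ht, hd, ← disc2]
    rw [e] at e'
    linear_combination e'
  have h4 : (b - 1) * (b + 1) = 0 := by
    rcases mul_eq_zero.mp h3 with h | h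
    · linear_combination h
    · exact absurd h hD
  rcases mul_eq_zero.mp h4 with hb | hb
  · left
    have hb : b = 1 := by linear_combination hb
    subst hb
    have : a = 0 := by
      apply mul_left_cancel₀ h2
      simp [tr2] at ht
      linear_combination ht
    simp [this]
  · right
    have hb : b = -1 := by linear_combination hb
    subst hb
    have : a = tr2 x := by
      apply mul_left_cancel₀ h2
      simp [tr2] at ht
      rw [tr2]
      linear_combination ht
    rw [this]; simp [sub_eq_add_neg]

lemma cayley (x : Matrix (Fin 2) (Fin 2) F) : x * x = tr2 x • x - dt2 x • 1 := by
  apply mat_ext <;> simp [Matrix.mul_apply, Fin.sum_univ_two, tr2, dt2] <;> ring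

lemma tr_zero_of_sq {x : Matrix (Fin 2) (Fin 2) F} (hx : ¬ Sc x) (h : Sc (x * x)) :
    tr2 x = 0 := by
  by_contra ht
  apply hx
  rw [cayley] at h
  obtain ⟨h1, h2, h3⟩ := h
  simp at h1 h2 h3
  have h1 := h1.resolve_left ht
  have h2 := h2.resolve_left ht
  have h3 := h3.resolve_right ht
  exact ⟨h1, h2, h3⟩

lemma tr_of_cube {x : Matrix (Fin 2) (Fin 2) F} (hx : ¬ Sc x) (h : Sc (x * x * x)) :
    tr2 x ^ 2 = dt2 x := by
  by_contra ht
  have ht : tr2 x ^ 2 - dt2 x ≠ 0 := sub_ne_zero.mpr ht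
  apply hx
  have e : x * x * x = (tr2 x ^ 2 - dt2 x) • x - (tr2 x * dt2 x) • 1 := by
    apply mat_ext <;> simp [Matrix.mul_apply, Fin.sum_univ_two, tr2, dt2] <;> ring
  rw [e] at h
  obtain ⟨h1, h2, h3⟩ := h
  simp at h1 h2 h3
  have h1 := h1.resolve_left ht
  have h2 := h2.resolve_left ht
  have h3 := h3.resolve_right ht
  exact ⟨h1, h2, h3⟩

lemma sc_mul_of_tr_zero {x y : Matrix (Fin 2) (Fin 2) F} (h2 : (2:F) ≠ 0) (hx : ¬ Sc x)
    (h : x * y = y * x) (htx : tr2 x = 0) (hty : tr2 y = 0) : ∃ b : F, y = b • x := by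
  obtain ⟨a, b, rfl⟩ := comm_form hx h
  refine ⟨b, ?_⟩
  have : a = 0 := by
    apply mul_left_cancel₀ h2
    simp [tr2] at hty htx
    linear_combination hty - b * htx
  simp [this]

lemma disc_sq_of_comm {x y : Matrix (Fin 2) (Fin 2) F} (hx : ¬ Sc x)
    (h : x * y = y * x) (hs : IsSquare (disc2 x)) : IsSquare (disc2 y) := by
  obtain ⟨a, b, rfl⟩ := comm_form hx h
  have e : disc2 (a • 1 + b • x) = (b * b) * disc2 x := by
    simp [disc2, tr2, dt2]; ring
  rw [e]
  exact (IsSquare.mul_self b).mul hs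

lemma sc_sq_of_tr_zero {x : Matrix (Fin 2) (Fin 2) F} (h : tr2 x = 0) :
    x * x = (-dt2 x) • 1 := by
  rw [cayley, h]; simp

lemma tr2_eq (A : Matrix (Fin 2) (Fin 2) F) : tr2 A = A.trace := by
  simp [tr2, Matrix.trace_fin_two]

lemma dt2_eq (A : Matrix (Fin 2) (Fin 2) F) : dt2 A = A.det := by
  simp [dt2, Matrix.det_fin_two]

end mats

section conc
variable {ℓ : ℕ} [Fact ℓ.Prime]
set_option linter.unusedSectionVars false

lemma nsq_mul {a b : ZMod ℓ} (ha : ¬ IsSquare a) (hb : ¬ IsSquare b) : IsSquare (a * b) := by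
  have ha' := quadraticChar_neg_one_iff_not_isSquare.mpr ha
  have hb' := quadraticChar_neg_one_iff_not_isSquare.mpr hb
  by_contra h
  have h' := quadraticChar_neg_one_iff_not_isSquare.mpr h
  rw [map_mul, ha', hb'] at h'
  norm_num at h'

lemma two_ne (hℓ : ℓ ≠ 2) : (2 : ZMod ℓ) ≠ 0 := by
  have hp := (Fact.out : ℓ.Prime)
  intro h
  have h' : ((2:ℕ) : ZMod ℓ) = 0 := by exact_mod_cast h
  rw [ZMod.natCast_eq_zero_iff] at h'
  exact hℓ ((Nat.prime_dvd_prime_iff_eq hp Nat.prime_two).mp h')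

lemma mat_mul (g h : GL2 ℓ) : mat (g * h) = mat g * mat h := rfl

lemma mat_inj {g h : GL2 ℓ} (e : mat g = mat h) : g = h := Units.ext e

lemma mat_mul_inv (g : GL2 ℓ) : mat g * mat g⁻¹ = 1 := by
  rw [← mat_mul, mul_inv_cancel]; rfl

lemma mat_inv_mul (g : GL2 ℓ) : mat g⁻¹ * mat g = 1 := by
  rw [← mat_mul, inv_mul_cancel]; rfl

lemma dt_ne (g : GL2 ℓ) : dt2 (mat g) ≠ 0 := by
  rw [dt2_eq]
  have := (Matrix.GeneralLinearGroup.det g).ne_zero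
  exact this

lemma tr_conj (x g : GL2 ℓ) : tr2 (mat (x * g * x⁻¹)) = tr2 (mat g) := by
  rw [tr2_eq, tr2_eq, mat_mul, mat_mul, Matrix.trace_mul_comm, ← mul_assoc, mat_inv_mul, one_mul]

lemma dt_conj (x g : GL2 ℓ) : dt2 (mat (x * g * x⁻¹)) = dt2 (mat g) := by
  rw [dt2_eq, dt2_eq, mat_mul, mat_mul, Matrix.det_mul_comm, ← mul_assoc, mat_inv_mul, one_mul]

lemma sc_conj {x g : GL2 ℓ} (h : Sc (mat (x * g * x⁻¹))) : Sc (mat g) := by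
  obtain ⟨c, hc⟩ := sc_iff.mp h
  rw [sc_iff]
  refine ⟨c, ?_⟩
  have : g = x⁻¹ * (x * g * x⁻¹) * x := by group
  rw [this, mat_mul, mat_mul, hc]
  simp [mat_inv_mul]

lemma sc_center {g : GL2 ℓ} : Sc (mat g) ↔ g ∈ Subgroup.center (GL2 ℓ) := by
  rw [Matrix.GeneralLinearGroup.mem_center_iff_val_mem_range_scalar, sc_iff]
  constructor
  · rintro ⟨c, hc⟩
    refine ⟨c, ?_⟩
    change _ = mat g
    rw [hc]
    apply mat_ext <;> simp
  · rintro ⟨c, hc⟩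
    refine ⟨c, ?_⟩
    change _ = mat g at hc
    rw [← hc]
    apply mat_ext <;> simp

variable {δ : ZMod ℓ}

lemma local_cond (hδ : ¬ IsSquare δ) {g x : GL2 ℓ} (h : InNns δ (x * g * x⁻¹))
    (hg : ¬ Sc (mat g)) : tr2 (mat g) = 0 ∨ ¬ IsSquare (disc2 (mat g)) := by
  by_contra hcon
  push Not at hcon
  obtain ⟨h1, h2⟩ := hcon
  have ht := tr_conj x g
  have hd := dt_conj x g
  have hD : disc2 (mat (x * g * x⁻¹)) = disc2 (mat g) := by simp only [disc2, ht, hd]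
  rw [← hD] at h2
  rw [← ht] at h1
  set y := x * g * x⁻¹ with hy
  have hyS : ¬ Sc (mat y) := fun h => hg (sc_conj h)
  rcases h with ⟨a, b⟩ | ⟨a, b⟩
  · have e : disc2 (mat y) = δ * (2 * mat y 1 0) ^ 2 := by
      simp only [disc2, tr2, dt2, a, b]; ring
    have hne : 2 * mat y 1 0 ≠ 0 := by
      intro h0
      apply hyS
      have h20 : (2 : ZMod ℓ) ≠ 0 := by
        intro h20
        apply h1
        rw [tr2, a]; linear_combination mat y 0 0 * h20
      have h10 := (mul_eq_zero.mp h0).resolve_left h20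
      exact ⟨by rw [b, h10, mul_zero], h10, a.symm⟩
    apply hδ
    obtain ⟨r, hr⟩ := h2
    refine ⟨r / (2 * mat y 1 0), ?_⟩
    rw [e] at hr
    rw [div_mul_div_comm, ← hr, eq_div_iff (mul_ne_zero hne hne)]; ring
  · apply h1
    rw [tr2, a]; ring

lemma disc_ne (hℓ : ℓ ≠ 2) {g : GL2 ℓ} (h : tr2 (mat g) = 0 ∨ ¬ IsSquare (disc2 (mat g))) :
    disc2 (mat g) ≠ 0 := by
  rcases h with h | h
  · rw [disc2, h]
    have h2 := two_ne hℓ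
    have h3 := dt_ne g
    intro h4
    have : (2 * 2 : ZMod ℓ) * dt2 (mat g) = 0 := by linear_combination -h4
    simp_all
  · intro h0; rw [h0] at h; exact h (IsSquare.zero)

/-- conjugate of `x` by `k`, commuting with `x` but different from it. -/
lemma conj_form (hℓ : ℓ ≠ 2) {x k : GL2 ℓ} (hx : ¬ Sc (mat x)) (hD : disc2 (mat x) ≠ 0)
    (hc : Commute x (k * x * k⁻¹)) :
    mat k * mat x = mat x * mat k ∨
      mat k * mat x = (tr2 (mat x) • 1 - mat x) * mat k := by
  have e : mat k * mat x = mat (k * x * k⁻¹) * mat k := by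
    rw [← mat_mul, ← mat_mul]; congr 1; group
  have hc' : mat x * mat (k * x * k⁻¹) = mat (k * x * k⁻¹) * mat x := by
    rw [← mat_mul, ← mat_mul, hc.eq]
  rcases same_or_conj (two_ne hℓ) hx hD hc' (tr_conj k x) (dt_conj k x) with h | h
  · left; rw [e, h]
  · right; rw [e, h]

lemma fin_lemma (hℓ : ℓ ≠ 2) (hδ : ¬ IsSquare δ) (G : Subgroup (GL2 ℓ)) {g : GL2 ℓ}
    (hD : ¬ IsSquare (disc2 (mat g))) (hc : ∀ k ∈ G, Commute g (k * g * k⁻¹)) :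
    ∃ x : GL2 ℓ, ∀ k ∈ G, InNns δ (x * k * x⁻¹) := by
  have h2 := two_ne hℓ
  have hδ0 : δ ≠ 0 := by rintro rfl; exact hδ IsSquare.zero
  have hD0 : disc2 (mat g) ≠ 0 := fun h0 => hD (h0 ▸ IsSquare.zero)
  have hS : ¬ Sc (mat g) := by
    rintro ⟨h1, h2, h3⟩
    apply hD0
    simp only [disc2, tr2, dt2, h1, h2, h3]; ring
  obtain ⟨r, hr⟩ := nsq_mul hD hδ
  set e := r / δ with he
  have heD : disc2 (mat g) = δ * e ^ 2 := by
    rw [he]; field_simp; rw [pow_two r, ← hr]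
  have he0 : e ≠ 0 := by rintro h0; apply hD0; rw [heD, h0]; ring
  set p := mat g 0 0 - mat g 1 1 with hp
  set q := mat g 0 1 with hq
  set s := mat g 1 0 with hs
  have hpD : p ^ 2 + 4 * q * s = δ * e ^ 2 := by
    rw [← heD, hp, hq, hs, disc2, tr2, dt2]; ring
  have hs0 : s ≠ 0 := by
    intro h0
    apply hD
    rw [heD, ← hpD, h0]
    exact ⟨p, by ring⟩
  let P : Matrix (Fin 2) (Fin 2) (ZMod ℓ) := !![1, p / e; 0, 2 * s / e]
  have hPdet : P.det ≠ 0 := by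
    simp [P, Matrix.det_fin_two, h2, hs0, he0]
  let X : GL2 ℓ := Matrix.GeneralLinearGroup.mkOfDetNeZero P hPdet
  have hXm : mat X = P := rfl
  -- `v = 2 g - tr g`
  let W : Matrix (Fin 2) (Fin 2) (ZMod ℓ) := !![0, δ * e; e, 0]
  let v : Matrix (Fin 2) (Fin 2) (ZMod ℓ) := (2 : ZMod ℓ) • mat g - tr2 (mat g) • 1
  have hv : v = !![p, 2 * q; 2 * s, -p] := by
    apply mat_ext <;> simp [v, hp, hq, hs, tr2] <;> ring
  have hPW : P * W = v * P := by
    rw [hv]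
    apply mat_ext <;> simp [P, W, Matrix.mul_apply, Fin.sum_univ_two] <;> field_simp
    linear_combination -hpD
    ring
  refine ⟨X⁻¹, fun k hk => ?_⟩
  rw [inv_inv]
  set k' := X⁻¹ * k * X with hk'
  have hXk : P * mat k' = mat k * P := by
    rw [← hXm, ← mat_mul, ← mat_mul, hk']; congr 1; group
  have hcan : ∀ A B : Matrix (Fin 2) (Fin 2) (ZMod ℓ), P * A = P * B → A = B := by
    intro A B h
    have := congrArg (fun t => mat X⁻¹ * t) h
    simp only [← mul_assoc] at this
    rw [← hXm, mat_inv_mul, one_mul, one_mul] at this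
    exact this
  rcases conj_form hℓ hS hD0 (hc k hk) with h | h
  · left
    have hkv : mat k * v = v * mat k := by
      simp only [v, mul_sub, sub_mul, Matrix.mul_smul, Matrix.smul_mul, h, mul_one, one_mul]
    have hkW : mat k' * W = W * mat k' := by
      apply hcan
      rw [← mul_assoc, hXk, mul_assoc, hPW, ← mul_assoc, hkv, mul_assoc, ← hXk, ← mul_assoc,
        ← hPW, mul_assoc]
    have h00 := congrFun (congrFun hkW 0) 0
    have h10 := congrFun (congrFun hkW 1) 0
    simp [W, Matrix.mul_apply, Fin.sum_univ_two] at h00 h10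
    constructor
    · apply mul_right_cancel₀ he0;  linear_combination h10
    · apply mul_right_cancel₀ he0; linear_combination h00
  · right
    have hkv : mat k * v = - (v * mat k) := by
      simp only [v, mul_sub, sub_mul, Matrix.mul_smul, Matrix.smul_mul, h, mul_one, one_mul,
        smul_sub, smul_smul]
      rw [two_mul, add_smul]
      abel
    have hkW : mat k' * W = - (W * mat k') := by
      apply hcan
      rw [← mul_assoc, hXk, mul_assoc, hPW, ← mul_assoc, hkv, neg_mul, mul_assoc, ← hXk,
        ← mul_assoc, ← hPW, mul_assoc, mul_neg]
    have h00 := congrFun (congrFun hkW 0) 0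
    have h10 := congrFun (congrFun hkW 1) 0
    simp only [Matrix.neg_apply, Matrix.mul_apply, Fin.sum_univ_two] at h00 h10
    simp [W] at h00 h10
    constructor
    · apply mul_right_cancel₀ he0; linear_combination h10
    · apply mul_right_cancel₀ he0; linear_combination h00

lemma nns_smul {c : ZMod ℓ} {g h : GL2 ℓ} (e : mat h = c • mat g) (hg : InNns δ g) :
    InNns δ h := by
  rcases hg with ⟨a, b⟩ | ⟨a, b⟩
  · left; constructor
    · simp [e, a]
    · simp [e, b]; ring
  · right; constructor
    · simp [e, a]
    · simp [e, b]; ring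

lemma exists_nonsplit (hℓ : ℓ ≠ 2) (hδ : ¬ IsSquare δ) (G : Subgroup (GL2 ℓ))
    (hloc : ∀ g ∈ G, ∃ x : GL2 ℓ, InNns δ (x * g * x⁻¹))
    (hdet : ∀ u : (ZMod ℓ)ˣ, ∃ g ∈ G, Matrix.GeneralLinearGroup.det g = u) :
    (∃ g ∈ G, ¬ IsSquare (disc2 (mat g))) ∨
    (∃ x : GL2 ℓ, ∀ g ∈ G, InNns δ (x * g * x⁻¹)) := by
  by_contra hcon
  push Not at hcon
  obtain ⟨hsq, hno⟩ := hcon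
  have h2 := two_ne hℓ
  have hδ0 : δ ≠ 0 := by rintro rfl; exact hδ IsSquare.zero
  have htr : ∀ g ∈ G, ¬ Sc (mat g) → tr2 (mat g) = 0 ∧ IsSquare (-dt2 (mat g)) := by
    intro g hg hS
    obtain ⟨x, hx⟩ := hloc g hg
    have h1 := (local_cond hδ hx hS).resolve_right (not_not.mpr (hsq g hg))
    refine ⟨h1, ?_⟩
    obtain ⟨r, hr⟩ := hsq g hg
    refine ⟨r / 2, ?_⟩
    rw [disc2, h1] at hr
    field_simp
    linear_combination hr
  obtain ⟨g0, hg0, hd0⟩ := hdet (Units.mk0 δ hδ0)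
  have hd0' : dt2 (mat g0) = δ := by
    rw [dt2_eq]
    exact congrArg Units.val hd0
  have hS0 : ¬ Sc (mat g0) := by
    rintro ⟨a, b, c⟩
    apply hδ
    rw [← hd0', dt2, a, c]
    exact ⟨mat g0 1 1, by ring⟩
  obtain ⟨ht0, hs0⟩ := htr g0 hg0 hS0
  rw [hd0'] at hs0
  obtain ⟨x, hx⟩ := hloc g0 hg0
  obtain ⟨g, hg, hgx⟩ := hno x
  apply hgx
  by_cases hS : Sc (mat g)
  · left
    have : x * g * x⁻¹ = g := by
      rw [Subgroup.mem_center_iff.mp (sc_center.mp hS) x]; group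
    rw [this]
    exact ⟨hS.2.2.symm, by rw [hS.1, hS.2.1, mul_zero]⟩
  · by_cases hSS : Sc (mat (g * g0))
    · obtain ⟨c, hc⟩ := sc_iff.mp hSS
      have e1 : mat (g * g0) * mat g0 = (-δ) • mat g := by
        rw [mat_mul, mul_assoc, sc_sq_of_tr_zero ht0, hd0']; simp
      have e2 : mat g = (-(c / δ)) • mat g0 := by
        rw [hc, Matrix.smul_mul, one_mul] at e1
        have : (-δ)⁻¹ • (c • mat g0) = mat g := by
          rw [e1, smul_smul, inv_mul_cancel₀ (neg_ne_zero.mpr hδ0), one_smul]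
        rw [← this, smul_smul]
        congr 1
        field_simp
      apply nns_smul (c := -(c / δ)) (g := x * g0 * x⁻¹) _ hx
      rw [mat_mul, mat_mul, e2, mat_mul, mat_mul]
      simp
    · exfalso
      obtain ⟨_, a1⟩ := htr g hg hS
      obtain ⟨_, a2⟩ := htr _ (mul_mem hg hg0) hSS
      have e : dt2 (mat (g * g0)) = dt2 (mat g) * δ := by
        rw [← hd0', dt2_eq, dt2_eq, dt2_eq, mat_mul, Matrix.det_mul]
      rw [e] at a2
      apply hδ
      have hne := dt_ne g
      have : δ = (-(dt2 (mat g) * δ)) / (-dt2 (mat g)) := by field_simp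
      rw [this]
      exact a2.div a1

end conc

section fin
variable {ℓ : ℕ} [Fact ℓ.Prime]
set_option linter.unusedSectionVars false

lemma neg_three_sq (h3 : ℓ % 3 = 1) : IsSquare (-3 : ZMod ℓ) := by
  haveI : Fact (Nat.Prime 3) := ⟨Nat.prime_three⟩
  have hp := (Fact.out : ℓ.Prime)
  have hd : 3 ∣ Nat.card (ZMod ℓ)ˣ := by
    rw [Nat.card_eq_fintype_card, ZMod.card_units]
    omega
  obtain ⟨w, hw⟩ := exists_prime_orderOf_dvd_card' 3 hd
  have h1 : w ^ 3 = 1 := by rw [← hw]; exact pow_orderOf_eq_one w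
  have h2 : w ≠ 1 := by rintro rfl; simp at hw
  have h1' : (w : ZMod ℓ) ^ 3 = 1 := by
    have := congrArg Units.val h1
    simpa using this
  have h2' : (w : ZMod ℓ) - 1 ≠ 0 := by
    intro h; apply h2; ext; simpa using sub_eq_zero.mp h
  have h4 : (w : ZMod ℓ) ^ 2 + w + 1 = 0 := by
    apply mul_left_cancel₀ h2'; linear_combination h1'
  exact ⟨2 * w + 1, by linear_combination -4 * h4⟩

lemma mod_24 (hℓ : ℓ ≠ 2) (h1 : ¬ IsSquare (-1 : ZMod ℓ)) (h2 : ¬ IsSquare (2 : ZMod ℓ))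
    (h3 : ¬ IsSquare (-3 : ZMod ℓ)) : ℓ % 24 = 11 := by
  rw [ZMod.exists_sq_eq_neg_one_iff] at h1
  rw [ZMod.exists_sq_eq_two_iff hℓ] at h2
  have h5 : ℓ % 3 ≠ 1 := fun h => h3 (neg_three_sq h)
  have h6 : ℓ % 3 ≠ 0 := by
    intro h
    have hp := (Fact.out : ℓ.Prime)
    have : ℓ = 3 := ((Nat.prime_dvd_prime_iff_eq Nat.prime_three hp).mp
      (Nat.dvd_of_mod_eq_zero h)).symm
    subst this
    apply h3
    have h0 : ((3 : ℕ) : ZMod 3) = 0 := ZMod.natCast_self 3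
    push_cast at h0
    exact ⟨0, by linear_combination -h0⟩
  omega

lemma normal_comm {G : Type*} [Group G] [Finite G] {x : G}
    (h : Nat.card G ≤ 2 * Nat.card (Subgroup.centralizer ({x} : Set G))) (k : G) :
    Commute x (k * x * k⁻¹) := by
  set C := Subgroup.centralizer ({x} : Set G) with hC
  have hi := C.card_mul_index
  have hpos : 0 < Nat.card C := Nat.card_pos
  have hle : C.index ≤ 2 := by
    by_contra hcon
    push Not at hcon
    have : Nat.card C * 3 ≤ Nat.card C * C.index := Nat.mul_le_mul_left _ hcon
    omega
  have hne : C.index ≠ 0 := Subgroup.index_ne_zero_of_finite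
  have hx : x ∈ C := by rw [hC, mem_cz]
  have hn : C.Normal := by
    rcases (by omega : C.index = 1 ∨ C.index = 2) with h1 | h1
    · rw [Subgroup.index_eq_one.mp h1]; infer_instance
    · exact Subgroup.normal_of_index_eq_two h1
  have := hn.conj_mem x hx k
  rwa [hC, mem_cz] at this

lemma comm_mat {G : Subgroup (GL2 ℓ)} {x y : G} :
    Commute x y ↔ mat x.1 * mat y.1 = mat y.1 * mat x.1 := by
  rw [← mat_mul, ← mat_mul]
  constructor
  · intro h; exact congrArg (fun t : G => mat t.1) h.eq
  · intro h; exact Subtype.ext (mat_inj h)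

lemma center_sc {G : Subgroup (GL2 ℓ)} (hab : ¬ ∀ x y : G, Commute x y) {x : G} :
    x ∈ Subgroup.center G ↔ Sc (mat x.1) := by
  constructor
  · intro h
    by_contra hS
    apply hab
    intro y z
    rw [Subgroup.mem_center_iff] at h
    rw [comm_mat]
    exact comm_trans hS (comm_mat.mp (h y).symm) (comm_mat.mp (h z).symm)
  · intro h
    rw [Subgroup.mem_center_iff]
    intro y
    exact (comm_mat.mpr (sc_comm h _)).symm.eq

lemma s4_iso {G : Subgroup (GL2 ℓ)} (hab : ¬ ∀ x y : G, Commute x y)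
    (φ : G →* Equiv.Perm (Fin 4)) (hφ : Function.Surjective φ)
    (hk : φ.ker = Subgroup.center G) : IsS4 (projImage G) := by
  let ψ := (toPGL ℓ).comp G.subtype
  have hr : ψ.range = projImage G := by
    rw [projImage, MonoidHom.range_comp, Subgroup.range_subtype]
  have hker : ψ.ker = φ.ker := by
    rw [hk]
    ext x
    rw [MonoidHom.mem_ker, center_sc hab, sc_center]
    exact QuotientGroup.eq_one_iff _
  rw [IsS4, ← hr]
  exact ⟨(QuotientGroup.quotientKerEquivRange ψ).symm.trans
    ((QuotientGroup.quotientMulEquivOfEq hker).trans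
      (QuotientGroup.quotientKerEquivOfSurjective φ hφ))⟩

/-- elements of square determinant -/
def sqDet (G : Subgroup (GL2 ℓ)) : Subgroup G where
  carrier := {x | IsSquare (dt2 (mat x.1))}
  one_mem' := ⟨1, by
    rw [dt2_eq]
    change Matrix.det (1 : Matrix (Fin 2) (Fin 2) (ZMod ℓ)) = _
    simp⟩
  mul_mem' := by
    intro a b ha hb
    change IsSquare _ at ha
    change IsSquare _ at hb
    change IsSquare _
    have : dt2 (mat (a * b).1) = dt2 (mat a.1) * dt2 (mat b.1) := by
      rw [dt2_eq, dt2_eq, dt2_eq, ← Matrix.det_mul]; rfl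
    rw [this]; exact ha.mul hb
  inv_mem' := by
    intro a ha
    change IsSquare _ at ha
    change IsSquare _
    have : dt2 (mat (a⁻¹).1) = (dt2 (mat a.1))⁻¹ := by
      apply eq_inv_of_mul_eq_one_left
      rw [dt2_eq, dt2_eq, ← Matrix.det_mul]
      change Matrix.det (mat (a.1)⁻¹ * mat a.1) = 1
      rw [mat_inv_mul]; simp
    rw [this]; exact ha.inv

lemma mem_sqDet {G : Subgroup (GL2 ℓ)} {x : G} : x ∈ sqDet G ↔ IsSquare (dt2 (mat x.1)) :=
  Iff.rfl

lemma sqDet_index {δ : ZMod ℓ} (hδ : ¬ IsSquare δ) (G : Subgroup (GL2 ℓ))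
    (hdet : ∀ u : (ZMod ℓ)ˣ, ∃ g ∈ G, Matrix.GeneralLinearGroup.det g = u) :
    (sqDet G).index = 2 := by
  have hδ0 : δ ≠ 0 := by rintro rfl; exact hδ IsSquare.zero
  obtain ⟨g0, hg0, hd0⟩ := hdet (Units.mk0 δ hδ0)
  have hd0' : dt2 (mat g0) = δ := by
    rw [dt2_eq]
    exact congrArg Units.val hd0
  rw [Subgroup.index_eq_two_iff]
  refine ⟨⟨g0, hg0⟩, fun b => ?_⟩
  have e : dt2 (mat (b * ⟨g0, hg0⟩ : G).1) = dt2 (mat b.1) * δ := by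
    rw [← hd0', dt2_eq, dt2_eq, dt2_eq, ← Matrix.det_mul]; rfl
  rw [mem_sqDet, mem_sqDet, e]
  by_cases hb : IsSquare (dt2 (mat b.1))
  · right
    refine ⟨hb, fun h => hδ ?_⟩
    have hne := dt_ne b.1
    have : δ = (dt2 (mat b.1) * δ) / dt2 (mat b.1) := by field_simp
    rw [this]
    exact h.div hb
  · left
    exact ⟨nsq_mul hb hδ, hb⟩

lemma main_aux (hℓ : ℓ ≠ 2) {δ : ZMod ℓ} (hδ : ¬ IsSquare δ)
    (G : Subgroup (GL2 ℓ))
    (hloc : ∀ g ∈ G, ∃ x : GL2 ℓ, InNns δ (x * g * x⁻¹))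
    (hdet : ∀ u : (ZMod ℓ)ˣ, ∃ g ∈ G, Matrix.GeneralLinearGroup.det g = u) :
    (∃ x : GL2 ℓ, ∀ g ∈ G, InNns δ (x * g * x⁻¹)) ∨
    (IsS4 (projImage G) ∧ ℓ % 24 = 11) := by
  have h2 := two_ne hℓ
  rcases exists_nonsplit hℓ hδ G hloc hdet with ⟨g1, hg1, hD1⟩ | h
  swap
  · exact Or.inl h
  have fin' : ∀ x : G, ¬ IsSquare (disc2 (mat x.1)) → (∀ k : G, Commute x (k * x * k⁻¹)) →
      ∃ x : GL2 ℓ, ∀ g ∈ G, InNns δ (x * g * x⁻¹) := by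
    intro x hx hk
    refine fin_lemma hℓ hδ G hx fun k hkG => ?_
    exact congrArg Subtype.val (hk ⟨k, hkG⟩).eq
  by_cases hab : ∀ x y : G, Commute x y
  · exact Or.inl (fin' ⟨g1, hg1⟩ hD1 fun k => hab _ _)
  have hZ : ∀ x : G, x ∈ Subgroup.center G ↔ Sc (mat x.1) := fun x => center_sc hab
  have hlc : ∀ x : G, x ∉ Subgroup.center G →
      tr2 (mat x.1) = 0 ∨ ¬ IsSquare (disc2 (mat x.1)) := by
    intro x hx
    obtain ⟨y, hy⟩ := hloc x.1 x.2
    exact local_cond hδ hy (fun h => hx ((hZ x).mpr h))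
  have hns : ∀ x : G, x ∉ Subgroup.center G → ¬ Sc (mat x.1) := fun x hx h => hx ((hZ x).mpr h)
  have hCA : HCA G := by
    intro x hx y z hy hz
    rw [comm_mat] at *
    exact comm_trans (hns x hx) hy hz
  have hN : HN G := by
    intro x hx k k' hk hk' nk nk'
    have hD := disc_ne hℓ (hlc x hx)
    have a1 := (conj_form hℓ (hns x hx) hD (k := k.1)
      (congrArg Subtype.val hk.eq)).resolve_left (fun h => nk (comm_mat.mpr h.symm))
    have a2 := (conj_form hℓ (hns x hx) hD (k := k'.1)
      (congrArg Subtype.val hk'.eq)).resolve_left (fun h => nk' (comm_mat.mpr h.symm))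
    rw [comm_mat]
    change mat x.1 * (mat k.1 * mat k'.1) = (mat k.1 * mat k'.1) * mat x.1
    have a3 : mat k.1 * (tr2 (mat x.1) • 1 - mat x.1) = mat x.1 * mat k.1 := by
      rw [mul_sub, a1, sub_mul]
      simp
    rw [mul_assoc, a2, ← mul_assoc, ← mul_assoc, a3]
  have htr0 : ∀ x : G, x ∉ Subgroup.center G → x ^ 2 ∈ Subgroup.center G →
      tr2 (mat x.1) = 0 := by
    intro x hx hx2
    apply tr_zero_of_sq (hns x hx)
    have := (hZ _).mp hx2
    rw [pow_two] at this
    exact this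
  have hprod : ∀ x y : G, Commute x y → x ∉ Subgroup.center G →
      tr2 (mat x.1) = 0 → tr2 (mat y.1) = 0 → x * y ∈ Subgroup.center G := by
    intro x y hc hx tx ty
    obtain ⟨b, hb⟩ := sc_mul_of_tr_zero h2 (hns x hx) (comm_mat.mp hc) tx ty
    rw [hZ]
    change Sc (mat x.1 * mat y.1)
    rw [hb, Matrix.mul_smul, sc_sq_of_tr_zero tx, sc_iff, smul_smul]
    exact ⟨_, rfl⟩
  have hZK : Subgroup.center G ≤ sqDet G := by
    intro x hx
    obtain ⟨a, b, c⟩ := (hZ x).mp hx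
    rw [mem_sqDet, dt2, a, c]
    exact ⟨mat x.1 1 1, by ring⟩
  rcases abs_main hCA hN (sqDet G) (sqDet_index hδ G hdet) hZK
    (fun x y hc hx hy hx2 hy2 => hprod x y hc hx (htr0 x hx hx2) (htr0 y hy hy2)) with
    ⟨x, hx, hcard⟩ | ⟨⟨φ, hφ, hker⟩, ⟨g, hgK, hg2, hg4⟩, d, hd, hd3⟩
  · left
    by_cases hDx : IsSquare (disc2 (mat x.1))
    · have g1n : (⟨g1, hg1⟩ : G) ∉ Subgroup.center G := by
        rw [hZ]
        rintro ⟨a, b, c⟩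
        apply hD1
        simp only [disc2, tr2, dt2]
        change mat g1 0 1 = 0 at a
        change mat g1 1 0 = 0 at b
        change mat g1 0 0 = mat g1 1 1 at c
        rw [a, b, c]
        exact ⟨0, by ring⟩
      obtain ⟨c, hc, hcc⟩ := cz_card g1n
      have ht : ∀ y ∈ Subgroup.centralizer ({x} : Set G), y ∉ Subgroup.center G →
          tr2 (mat y.1) = 0 := by
        intro y hy hyn
        rw [mem_cz, comm_mat] at hy
        exact (hlc y hyn).resolve_right (not_not.mpr (disc_sq_of_comm (hns x hx) hy hDx))
      have h4 := card_le_two_mul (Subgroup.center G) (Subgroup.centralizer ({x} : Set G))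
        (fun a ha b hb an bn => hprod a b
          (hCA x hx a b (mem_cz.mp ha) (mem_cz.mp hb)) an (ht a ha an) (ht b hb bn))
      refine fin' ⟨g1, hg1⟩ hD1 (normal_comm ?_)
      rw [hcc]
      have := Nat.mul_le_mul_right (Nat.card (Subgroup.center G)) hc
      omega
    · exact fin' x hDx (normal_comm hcard)
  · right
    refine ⟨s4_iso hab φ hφ hker, ?_⟩
    have gn : g ∉ Subgroup.center G := fun h => hgK (hZK h)
    have t0 : tr2 (mat g.1 * mat g.1) = 0 := by
      have := htr0 (g ^ 2) hg2 (by rw [← pow_mul]; exact hg4)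
      rw [pow_two] at this
      exact this
    have t1 : tr2 (mat g.1) ^ 2 = 2 * dt2 (mat g.1) := by
      simp only [tr2, dt2, Matrix.mul_apply, Fin.sum_univ_two] at t0 ⊢
      linear_combination t0
    have hdne := dt_ne g.1
    have tne : tr2 (mat g.1) ≠ 0 := by
      intro h
      rw [h] at t1
      have : 2 * dt2 (mat g.1) = 0 := by rw [← t1]; ring
      exact (mul_ne_zero h2 hdne) this
    have gD := (hlc g gn).resolve_left tne
    have gK : ¬ IsSquare (dt2 (mat g.1)) := hgK
    have t3 : tr2 (mat d.1) ^ 2 = dt2 (mat d.1) := by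
      apply tr_of_cube (hns d hd)
      have := (hZ _).mp hd3
      rw [pow_succ, pow_two] at this
      exact this
    have tne' : tr2 (mat d.1) ≠ 0 := by
      intro h
      apply dt_ne d.1
      rw [← t3, h]; ring
    have dD := (hlc d hd).resolve_left tne'
    apply mod_24 hℓ
    · rintro ⟨r, hr⟩
      apply gD
      refine ⟨r * tr2 (mat g.1), ?_⟩
      rw [disc2]
      linear_combination 2 * t1 + tr2 (mat g.1) ^ 2 * hr
    · rintro ⟨r, hr⟩
      apply gK
      have hr0 : r ≠ 0 := by rintro rfl; apply h2; rw [hr]; ring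
      refine ⟨tr2 (mat g.1) / r, ?_⟩
      rw [div_mul_div_comm, ← hr, eq_div_iff h2]
      linear_combination -t1
    · rintro ⟨r, hr⟩
      apply dD
      refine ⟨r * tr2 (mat d.1), ?_⟩
      rw [disc2, ← t3]
      linear_combination tr2 (mat d.1) ^ 2 * hr

end fin

/-- If every element of `G ≤ GL₂(F_ℓ)` lies in a conjugate of `N_ns`, some
element lies in no conjugate of `C_ns`, and the determinant map `G → F_ℓˣ` is surjective,
then `G` is in a conjugate of `N_ns`, or its projective image is `S₄` and
`ℓ ≡ 11 (mod 24)`. -/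
theorem local_global_normalizer_nonsplit_cartan_surjective_det
    {ℓ : ℕ} [Fact ℓ.Prime] (hℓ : ℓ ≠ 2) (δ : ZMod ℓ) (hδ : ¬ IsSquare δ)
    (G : Subgroup (GL2 ℓ))
    (hloc : ∀ g ∈ G, ∃ x : GL2 ℓ, InNns δ (x * g * x⁻¹))
    (hnc : ∃ g ∈ G, ¬ ∃ x : GL2 ℓ, InCns δ (x * g * x⁻¹))
    (hdet : ∀ u : (ZMod ℓ)ˣ, ∃ g ∈ G, Matrix.GeneralLinearGroup.det g = u) :
    (∃ x : GL2 ℓ, ∀ g ∈ G, InNns δ (x * g * x⁻¹)) ∨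
    (IsS4 (projImage G) ∧ ℓ % 24 = 11) :=
  main_aux hℓ hδ G hloc hdet
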